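/- arXiv:2406.04872 — 2 statements merged into one kernel-verified Lean document; each statement's English description precedes it below -/
import Mathlib

section
/- For every subset S of B and every orthonormal basis E of the subspace W_S, one has sqrt(|E| * Σ_{e∈E} ⟨e, v⟩²) = r(S); in particular the left-hand side does not depend on the choice of the orthonormal basis E of W_S. -/
/-!
Statement 0 (Proposition 3.1): for every subset `S` of the finite batch `B` and every
orthonormal basis `E` of the subspace `W_S = span {g d : d ∈ S}`, one has
`sqrt (|E| * Σ_{e ∈ E} ⟪e, v⟫²) = r S`, where `v = Σ_{d ∈ B} g d` and
`r S` is the supremum of `Σ_{e ∈ E} ⟪e, v⟫` over all orthonormal bases `E` of `W_S`.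
-/

open scoped RealInnerProductSpace

noncomputable section

variable {V ι : Type*} [NormedAddCommGroup V] [InnerProductSpace ℝ V]

/-- The subspace spanned by the features of the elements of `S`. -/
def featSpan (g : ι → V) (S : Finset ι) : Submodule ℝ V :=
  Submodule.span ℝ (g '' (S : Set ι))

/-- `E` is a finite orthonormal family of vectors of `V` whose span equals `W`. -/
def IsONBasisOf (E : Finset V) (W : Submodule ℝ V) : Prop :=
  (Orthonormal ℝ (fun e : E => (e : V))) ∧ Submodule.span ℝ (E : Set V) = W

/-- The orthogonalized representativeness
`r(S) = sup { Σ_{e ∈ E} ⟪e, v⟫ : E an orthonormal basis of W_S }`,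
where `v = Σ_{d ∈ B} g d`. -/
def r (g : ι → V) (B S : Finset ι) : ℝ :=
  sSup {x : ℝ | ∃ E : Finset V, IsONBasisOf E (featSpan g S) ∧
    x = ∑ e ∈ E, ⟪e, ∑ d ∈ B, g d⟫}

/-- The coordinate sum of `v` along a finite orthonormal family has the same inner products as `v`
with all vectors of the span of the family. -/
theorem inner_sum_inner_smul_of_mem_span {E : Finset V}
    (hE : Orthonormal ℝ (fun e : E => (e : V))) (v : V) {x : V}
    (hx : x ∈ Submodule.span ℝ (E : Set V)) :
    ⟪x, ∑ e ∈ E, ⟪e, v⟫ • e⟫ = ⟪x, v⟫ := by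
  induction hx using Submodule.span_induction with
  | mem x hx =>
    have h := hE.inner_right_fintype (fun e : E => ⟪(e : V), v⟫) ⟨x, hx⟩
    rwa [Finset.sum_coe_sort E (fun e => ⟪e, v⟫ • e)] at h
  | zero => simp
  | add x y _ _ hx hy => rw [inner_add_left, inner_add_left, hx, hy]
  | smul a x _ hx => rw [real_inner_smul_left, real_inner_smul_left, hx]

theorem norm_sq_sum_inner_smul {E : Finset V}
    (hE : Orthonormal ℝ (fun e : E => (e : V))) (v : V) :
    ‖∑ e ∈ E, ⟪e, v⟫ • e‖ ^ 2 = ∑ e ∈ E, ⟪e, v⟫ ^ 2 := by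
  rw [← real_inner_self_eq_norm_sq, inner_sum_inner_smul_of_mem_span hE v
    (Submodule.sum_mem _ fun e he => Submodule.smul_mem _ _ (Submodule.subset_span he)), sum_inner]
  exact Finset.sum_congr rfl fun e _ => by rw [real_inner_smul_left, sq]

theorem norm_sum_of_orthonormal {E : Finset V}
    (hE : Orthonormal ℝ (fun e : E => (e : V))) :
    ‖∑ e ∈ E, e‖ = √(E.card : ℝ) := by
  have h := hE.inner_sum (fun _ => 1) (fun _ => 1) Finset.univ
  simp only [one_smul, Finset.sum_coe_sort E (fun e => e), real_inner_self_eq_norm_sq] at h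
  rw [← Real.sqrt_sq (norm_nonneg (∑ e ∈ E, e)), h]
  simp

theorem IsONBasisOf.card_eq_finrank {E : Finset V} {W : Submodule ℝ V} (hE : IsONBasisOf E W) :
    E.card = Module.finrank ℝ W := by
  rw [← hE.2]
  exact (finrank_span_finset_eq_card hE.1.linearIndependent).symm

/-- The reflection in the hyperplane orthogonal to a vector of `W` maps `W` onto itself. -/
theorem map_reflection_orthogonal_singleton {W : Submodule ℝ V} {a : V} (ha : a ∈ W) :
    W.map ((ℝ ∙ a)ᗮ.reflection.toLinearEquiv : V →ₗ[ℝ] V) = W := by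
  have hmem : ∀ x ∈ W, (ℝ ∙ a)ᗮ.reflection x ∈ W := fun x hx => by
    rw [Submodule.reflection_orthogonal_apply, Submodule.reflection_singleton_apply]
    exact W.neg_mem (W.sub_mem (W.smul_of_tower_mem 2 (W.smul_mem _ ha)) hx)
  refine le_antisymm (Submodule.map_le_iff_le_comap.2 hmem) fun x hx => ?_
  exact ⟨_, hmem x hx, Submodule.reflection_reflection _ x⟩

theorem IsONBasisOf.map {E : Finset V} {W : Submodule ℝ V} (hE : IsONBasisOf E W)
    (f : V ≃ₗᵢ[ℝ] V) (hf : W.map (f.toLinearEquiv : V →ₗ[ℝ] V) = W) :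
    IsONBasisOf (E.map f.toEquiv.toEmbedding) W := by
  constructor
  · refine ⟨fun ⟨x, hx⟩ => ?_, fun ⟨x, hx⟩ ⟨y, hy⟩ hxy => ?_⟩
    · obtain ⟨e, he, rfl⟩ := Finset.mem_map.1 hx
      exact (f.norm_map e).trans (hE.1.1 ⟨e, he⟩)
    · obtain ⟨e, he, rfl⟩ := Finset.mem_map.1 hx
      obtain ⟨e', he', rfl⟩ := Finset.mem_map.1 hy
      refine (f.inner_map_map e e').trans (hE.1.2 (i := ⟨e, he⟩) (j := ⟨e', he'⟩) fun h => hxy ?_)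
      cases h
      rfl
  · rw [Finset.coe_map]
    conv_rhs => rw [← hf, ← hE.2, Submodule.map_span]
    rfl

/-- Some orthonormal basis of `W` has its sum equal to any prescribed vector of `W` of the
right norm. -/
theorem IsONBasisOf.exists_sum_eq {E : Finset V} {W : Submodule ℝ V} (hE : IsONBasisOf E W)
    {a : V} (ha : a ∈ W) (hnorm : ‖a‖ = √(E.card : ℝ)) :
    ∃ F : Finset V, IsONBasisOf F W ∧ ∑ e ∈ F, e = a := by
  have hsum : ∑ e ∈ E, e ∈ W := hE.2 ▸ Submodule.sum_mem _ fun e he => Submodule.subset_span he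
  refine ⟨_, hE.map _ (map_reflection_orthogonal_singleton (W.sub_mem hsum ha)), ?_⟩
  rw [Finset.sum_map]
  refine (map_sum (ℝ ∙ (∑ e ∈ E, e - a))ᗮ.reflection (fun e => e) E).symm.trans ?_
  exact Submodule.reflection_sub ((norm_sum_of_orthonormal hE.1).trans hnorm.symm)

theorem sqrt_card_mul_sum_inner_sq_eq_r
    (g : ι → V) (B : Finset ι) (S : Finset ι) (hS : S ⊆ B)
    (E : Finset V) (hE : IsONBasisOf E (featSpan g S)) :
    Real.sqrt ((E.card : ℝ) * ∑ e ∈ E, ⟪e, ∑ d ∈ B, g d⟫ ^ 2) = r g B S := by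
  have hinner := fun x hx =>
    inner_sum_inner_smul_of_mem_span hE.1 (∑ d ∈ B, g d) (x := x) (hE.2.symm ▸ hx)
  have hwmem : ∑ e ∈ E, ⟪e, ∑ d ∈ B, g d⟫ • e ∈ featSpan g S :=
    hE.2 ▸ Submodule.sum_mem _ fun e he => Submodule.smul_mem _ _ (Submodule.subset_span he)
  rw [← norm_sq_sum_inner_smul hE.1, Real.sqrt_mul (Nat.cast_nonneg _),
    Real.sqrt_sq (norm_nonneg _)]
  generalize ∑ e ∈ E, ⟪e, ∑ d ∈ B, g d⟫ • e = w at hinner hwmem ⊢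
  unfold r
  generalize ∑ d ∈ B, g d = v at hinner ⊢
  refine (IsGreatest.csSup_eq ⟨?_, ?_⟩).symm
  · rcases eq_or_ne w 0 with rfl | hw
    · refine ⟨E, hE, ?_⟩
      rw [← sum_inner, ← hinner _ (hE.2 ▸ Submodule.sum_mem _ fun e he => Submodule.subset_span he)]
      simp
    · have hw' : ‖w‖ ≠ 0 := norm_ne_zero_iff.2 hw
      obtain ⟨F, hF, hsum⟩ := hE.exists_sum_eq (a := (√(E.card : ℝ) / ‖w‖) • w)
        (Submodule.smul_mem _ _ hwmem) (by
          rw [norm_smul, Real.norm_of_nonneg (by positivity), div_mul_cancel₀ _ hw'])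
      refine ⟨F, hF, ?_⟩
      rw [← sum_inner, hsum, real_inner_smul_left, ← hinner w hwmem, real_inner_self_eq_norm_sq]
      field_simp
  · rintro _ ⟨F, hF, rfl⟩
    rw [← sum_inner, ← hinner _ (hF.2 ▸ Submodule.sum_mem _ fun e he => Submodule.subset_span he),
      hE.card_eq_finrank, ← hF.card_eq_finrank, ← norm_sum_of_orthonormal hF.1]
    exact real_inner_le_norm _ _

end
end

section
/- Let ι be a finite type and F : Finset ι → ℝ be normalized (F(∅) = 0), monotone (A ⊆ C implies F(A) ≤ F(C)), and submodular (for all S and all j, k ∉ S, F(S ∪ {k}) − F(S) ≥ F(S ∪ {j, k}) − F(S ∪ {j})). Let N be a natural number and let S₀ = ∅, S₁, …, S_N be a greedy chain: for each t < N there is x_t ∉ S_t with S_{t+1} = S_t ∪ {x_t} and F(S_t ∪ {x_t}) ≥ F(S_t ∪ {y}) for every y ∉ S_t. Then for every T ⊆ ι with |T| = N, F(S_N) ≥ (1 − e^{−1}) · F(T), where e is Euler's number. -/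
/-- The marginal gain of an element does not increase when the base set grows. -/
theorem marginal_gain_union_le {ι : Type*} [DecidableEq ι] {F : Finset ι → ℝ}
    (hsubmodular : ∀ (S : Finset ι) (j k : ι), j ∉ S → k ∉ S →
      F (insert k S) - F S ≥ F (insert k (insert j S)) - F (insert j S))
    (A U : Finset ι) {k : ι} (hk : k ∉ A ∪ U) :
    F (insert k (A ∪ U)) - F (A ∪ U) ≤ F (insert k A) - F A := by
  induction U using Finset.induction_on with
  | empty => simp
  | insert j U _ ih =>
    rw [Finset.union_insert] at hk ⊢
    have hkU : k ∉ A ∪ U := fun h => hk (Finset.mem_insert_of_mem h)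
    by_cases hj : j ∈ A ∪ U
    · rw [Finset.insert_eq_self.2 hj]
      exact ih hkU
    · exact (hsubmodular (A ∪ U) j k hj hkU).le.trans (ih hkU)

/-- If every element has marginal gain at most `d` over `A`, then adjoining `T` to `A` gains at
most `T.card * d`. -/
theorem union_gain_le_card_mul {ι : Type*} [DecidableEq ι] {F : Finset ι → ℝ}
    (hsubmodular : ∀ (S : Finset ι) (j k : ι), j ∉ S → k ∉ S →
      F (insert k S) - F S ≥ F (insert k (insert j S)) - F (insert j S))
    {A : Finset ι} {d : ℝ} (hd : 0 ≤ d) (hgain : ∀ y ∉ A, F (insert y A) - F A ≤ d)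
    (T : Finset ι) :
    F (A ∪ T) - F A ≤ T.card * d := by
  induction T using Finset.induction_on with
  | empty => simp
  | insert k T hkT ih =>
    rw [Finset.union_insert, Finset.card_insert_of_notMem hkT]
    push_cast
    by_cases hk : k ∈ A ∪ T
    · rw [Finset.insert_eq_self.2 hk]
      linarith
    · have hmarginal := marginal_gain_union_le hsubmodular A T hk
      have hkA := hgain k fun h => hk (Finset.mem_union_left T h)
      linarith

/-!
Statement 13 (Lemma B.1, Nemhauser–Wolsey–Fisher guarantee): let `ι` be a finite type
and `F : Finset ι → ℝ` be normalized (`F ∅ = 0`), monotone, and submodular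
(for all `S` and `j, k ∉ S`, `F (S ∪ {k}) − F S ≥ F (S ∪ {j, k}) − F (S ∪ {j})`).
If `S 0 = ∅, S 1, …, S N` is a greedy chain, then for every `T` with `|T| = N`,
`F (S N) ≥ (1 − e⁻¹) * F T`.
-/

theorem greedy_submodular_guarantee {ι : Type*} [Fintype ι] [DecidableEq ι]
    (F : Finset ι → ℝ)
    (hnormalized : F ∅ = 0)
    (hmono : ∀ A C : Finset ι, A ⊆ C → F A ≤ F C)
    (hsubmodular : ∀ (S : Finset ι) (j k : ι), j ∉ S → k ∉ S →
      F (insert k S) - F S ≥ F (insert k (insert j S)) - F (insert j S))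
    (N : ℕ) (S : ℕ → Finset ι)
    (hS0 : S 0 = ∅)
    (hgreedy : ∀ t < N, ∃ x ∉ S t, S (t + 1) = insert x (S t) ∧
      ∀ y ∉ S t, F (insert y (S t)) ≤ F (insert x (S t)))
    (T : Finset ι) (hT : T.card = N) :
    F (S N) ≥ (1 - Real.exp (-1)) * F T := by
  obtain rfl | hN := Nat.eq_zero_or_pos N
  · rw [hS0, Finset.card_eq_zero.1 hT, hnormalized, mul_zero]
  have hNpos : (0 : ℝ) < N := by exact_mod_cast hN
  have hratio : (0 : ℝ) ≤ 1 - 1 / N := by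
    rw [sub_nonneg, div_le_one hNpos]
    exact_mod_cast hN
  have hgap : ∀ t ≤ N, F T - F (S t) ≤ (1 - 1 / (N : ℝ)) ^ t * F T := by
    intro t
    induction t with
    | zero => simp [hS0, hnormalized]
    | succ t ih =>
      intro ht
      obtain ⟨x, -, hSx, hbest⟩ := hgreedy t ht
      have hunion := union_gain_le_card_mul hsubmodular
        (sub_nonneg.2 (hmono _ _ (Finset.subset_insert x (S t))))
        (fun y hy => sub_le_sub_right (hbest y hy) _) T
      rw [hT, ← hSx] at hunion
      have hstep : (F T - F (S t)) / N ≤ F (S (t + 1)) - F (S t) := by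
        rw [div_le_iff₀' hNpos]
        linarith [hmono T (S t ∪ T) Finset.subset_union_right]
      calc F T - F (S (t + 1)) ≤ (F T - F (S t)) - (F T - F (S t)) / N := by linarith
        _ = (1 - 1 / (N : ℝ)) * (F T - F (S t)) := by ring
        _ ≤ (1 - 1 / (N : ℝ)) * ((1 - 1 / (N : ℝ)) ^ t * F T) :=
          mul_le_mul_of_nonneg_left (ih (Nat.le_of_succ_le ht)) hratio
        _ = (1 - 1 / (N : ℝ)) ^ (t + 1) * F T := by ring
  have hexp : (1 - 1 / (N : ℝ)) ^ N ≤ Real.exp (-1) :=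
    Real.one_sub_div_pow_le_exp_neg (by exact_mod_cast hN)
  have hFT : 0 ≤ F T := hnormalized ▸ hmono ∅ T (Finset.empty_subset T)
  linarith [hgap N le_rfl, mul_le_mul_of_nonneg_right hexp hFT]
end
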